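/- arXiv:1506.08262 — 2 statements merged into one kernel-verified Lean document; each statement's English description precedes it below -/
import Mathlib

section
/- For n prime, (p₁ⁿ − pₙ)/n equals the sum of F_{Des(c)} over all cyclic permutations c of [n] (i.e., permutations consisting of a single n-cycle). -/
open Classical in
/-- The power sum symmetric function `p_i = x₁^i + x₂^i + ⋯` (variables indexed by `ℕ`),
as a multivariate power series: the coefficient of a monomial `d` is 1 iff `d = x_j^i`. -/
noncomputable def powerSum (i : ℕ) : MvPowerSeries ℕ ℚ :=
  fun d => if ∃ j, d = Finsupp.single j i then 1 else 0

/-- The fundamental quasisymmetric function `F_S` of degree `n` (0-indexed descent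
positions `S ⊆ {0, …, n-2}`): the coefficient of a monomial `d` is the number of weakly
increasing sequences `g : Fin n → ℕ`, strictly increasing from position `i` to `i+1`
for `i ∈ S`, whose content is `d`. -/
noncomputable def funF (n : ℕ) (S : Set ℕ) : MvPowerSeries ℕ ℚ :=
  fun d => (Nat.card {g : Fin n → ℕ //
    (∀ i : ℕ, ∀ h : i + 1 < n,
      g ⟨i, Nat.lt_of_succ_lt h⟩ ≤ g ⟨i + 1, h⟩ ∧
      (i ∈ S → g ⟨i, Nat.lt_of_succ_lt h⟩ < g ⟨i + 1, h⟩)) ∧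
    ∀ j : ℕ, d j = Nat.card {t : Fin n // g t = j}} : ℚ)

/-- The (0-indexed) descent set of a map `σ : Fin n → Fin n`:
positions `i` with `σ(i) > σ(i+1)`. -/
def desSet (n : ℕ) (σ : Fin n → Fin n) : Set ℕ :=
  {i | ∃ h : i + 1 < n, σ ⟨i + 1, h⟩ < σ ⟨i, Nat.lt_of_succ_lt h⟩}

/-- `χ ∈ A(π, S)`: the coloring `χ` is weakly increasing along `π⁻¹(0), …, π⁻¹(n-1)`,
strictly from position `i` to `i+1` whenever `i ∈ S`. -/
def inA (n : ℕ) (π : Equiv.Perm (Fin n)) (S : Set ℕ) (χ : Fin n → ℕ) : Prop :=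
  ∀ i : ℕ, ∀ h : i + 1 < n,
    χ (π.symm ⟨i, Nat.lt_of_succ_lt h⟩) ≤ χ (π.symm ⟨i + 1, h⟩) ∧
    (i ∈ S → χ (π.symm ⟨i, Nat.lt_of_succ_lt h⟩) < χ (π.symm ⟨i + 1, h⟩))

/-!
Let `τ` be an `n`-cycle. Every `n`-cycle `c` equals `e⁻¹ τ e` for exactly `n` permutations `e`, a
coset of the centralizer of `τ`. Reading a word `w` along `e` turns the inequalities that define
`F_{Des c}` into the statement that `e` lists the rotations of `w` in strictly increasing
lexicographic order. Such an `e` exists, and is then unique, exactly when the rotations of `w` are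
distinct; hence `n` times the sum of the `F_{Des c}` enumerates the primitive words of length `n`.
For `n` prime these are the nonconstant words, which `p₁ⁿ - pₙ` enumerates.
-/

open Equiv Function

section WordSeries

variable {ι σ R : Type*} [Fintype ι]

/-- The content of a word `w`: the number of occurrences of each letter, encoded as the exponent
vector of the monomial `∏ i, x_{w i}` by which words are enumerated. -/
noncomputable def wordContent (w : ι → σ) : σ →₀ ℕ :=
  ∑ i, Finsupp.single (w i) 1

lemma wordContent_apply (w : ι → σ) (j : σ) : wordContent w j = Nat.card {i // w i = j} := by
  classical
  simp only [wordContent, Finsupp.finsetSum_apply, Finsupp.single_apply, Finset.sum_boole,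
    Nat.cast_id, Nat.card_eq_fintype_card, Fintype.card_subtype]

lemma wordContent_comp_equiv {κ : Type*} [Fintype κ] (e : κ ≃ ι) (w : ι → σ) :
    wordContent (w ∘ e) = wordContent w :=
  e.sum_comp fun i ↦ Finsupp.single (w i) 1

lemma finite_setOf_wordContent_eq (d : σ →₀ ℕ) : {w : ι → σ | wordContent w = d}.Finite := by
  refine (Set.Finite.pi' fun _ ↦ d.hasFiniteSupport).subset ?_
  rintro w rfl i
  have : Nonempty {j // w j = w i} := ⟨⟨i, rfl⟩⟩
  rw [Function.mem_support, wordContent_apply]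
  exact Nat.card_pos.ne'

variable [CommSemiring R]

/-- The generating series `∑ w, f w * ∏ i, x_{w i}` of the words `w : ι → σ` with weights `f`. It is
linear in `f`, so that identities of series reduce to identities between weights of single words. -/
noncomputable def wordSeries : ((ι → σ) → R) →ₗ[R] MvPowerSeries σ R where
  toFun f d := ∑ w ∈ (finite_setOf_wordContent_eq d).toFinset, f w
  map_add' _ _ := funext fun _ ↦ Finset.sum_add_distrib
  map_smul' _ _ := funext fun _ ↦ (Finset.mul_sum ..).symm

lemma coeff_wordSeries (f : (ι → σ) → R) (d : σ →₀ ℕ) :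
    MvPowerSeries.coeff d (wordSeries f) =
      ∑ w ∈ (finite_setOf_wordContent_eq d).toFinset, f w :=
  rfl

lemma coeff_wordSeries_indicator (A : Set (ι → σ)) (d : σ →₀ ℕ) :
    MvPowerSeries.coeff d (wordSeries (A.indicator (1 : (ι → σ) → R))) =
      Nat.card {w // w ∈ A ∧ wordContent w = d} := by
  classical
  simp only [coeff_wordSeries, Set.indicator_apply, Pi.one_apply, Finset.sum_boole]
  congr 1
  exact (Nat.subtype_card _ fun w ↦ by simp [and_comm]).symm

lemma wordSeries_comp_equiv {κ : Type*} [Fintype κ] (e : κ ≃ ι) (f : (κ → σ) → R) :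
    wordSeries (fun w : ι → σ ↦ f (w ∘ e)) = wordSeries f := by
  ext d
  refine Finset.sum_equiv (e.symm.arrowCongr (Equiv.refl σ)) (fun w ↦ ?_) fun w _ ↦ rfl
  have : e.symm.arrowCongr (Equiv.refl σ) w = w ∘ e := rfl
  simp [this, wordContent_comp_equiv]

end WordSeries

section PowerSum

variable (ι : Type*) [Fintype ι]

lemma powerSum_one_pow_card :
    powerSum 1 ^ Fintype.card ι = wordSeries (1 : (ι → ℕ) → ℚ) := by
  classical
  ext d
  rw [← Finset.card_univ, ← Finset.prod_const, MvPowerSeries.coeff_prod, coeff_wordSeries]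
  symm
  refine Finset.sum_of_injOn
    (fun w ↦ Finsupp.equivFunOnFinite.symm fun i ↦ Finsupp.single (w i) 1) ?_ ?_ ?_ ?_
  · intro w _ w' _ h
    funext i
    exact (Finsupp.single_left_inj one_ne_zero).1
      (congrFun (Finsupp.equivFunOnFinite.symm.injective h) i)
  · intro w hw
    simpa [wordContent] using hw
  · intro l hl hw
    obtain ⟨i, hi⟩ : ∃ i, ¬ ∃ j, l i = Finsupp.single j 1 := by
      by_contra! h
      choose w hlw using h
      refine hw ⟨w, ?_, Finsupp.ext fun i ↦ (hlw i).symm⟩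
      simpa [wordContent, ← hlw] using hl
    exact Finset.prod_eq_zero (Finset.mem_univ i) (if_neg hi)
  · intro w _
    exact (Finset.prod_eq_one fun i _ ↦ if_pos ⟨w i, rfl⟩).symm

lemma powerSum_card [Nonempty ι] :
    powerSum (Fintype.card ι) =
      wordSeries ((Set.range (const ι)).indicator (1 : (ι → ℕ) → ℚ)) := by
  classical
  ext d
  have content_const (j : ℕ) : wordContent (const ι j) = Finsupp.single j (Fintype.card ι) := by
    simp [wordContent]
  rw [coeff_wordSeries_indicator]
  change (if ∃ j, d = Finsupp.single j (Fintype.card ι) then (1 : ℚ) else 0) = _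
  split_ifs with hd
  · obtain ⟨j, rfl⟩ := hd
    have : Unique {w // w ∈ Set.range (const ι) ∧
        wordContent w = Finsupp.single j (Fintype.card ι)} :=
      { default := ⟨const ι j, ⟨j, rfl⟩, content_const j⟩
        uniq := by
          rintro ⟨_, ⟨k, rfl⟩, hk⟩
          rw [content_const, Finsupp.single_left_inj Fintype.card_ne_zero] at hk
          simp only [hk] }
    rw [Nat.card_unique, Nat.cast_one]
  · have : IsEmpty {w // w ∈ Set.range (const ι) ∧ wordContent w = d} := by
      refine ⟨?_⟩
      rintro ⟨_, ⟨j, rfl⟩, rfl⟩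
      exact hd ⟨j, content_const j⟩
    rw [Nat.card_of_isEmpty, Nat.cast_zero]

end PowerSum

lemma adjacent_lt_iff_strictMono_toLex {n : ℕ} {β : Type*} [LinearOrder β] {c : Fin n → Fin n}
    (hc : Injective c) (g : Fin n → β) :
    (∀ i : ℕ, ∀ h : i + 1 < n,
      g ⟨i, Nat.lt_of_succ_lt h⟩ ≤ g ⟨i + 1, h⟩ ∧
      (i ∈ desSet n c → g ⟨i, Nat.lt_of_succ_lt h⟩ < g ⟨i + 1, h⟩)) ↔
    StrictMono fun i ↦ toLex (g i, c i) := by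
  cases n with
  | zero => simp [Subsingleton.strictMono]
  | succ n =>
    have lt_succ_iff {i : ℕ} (hi : i < n) :
        (g (Fin.castSucc ⟨i, hi⟩) ≤ g (Fin.succ ⟨i, hi⟩) ∧
          (i ∈ desSet (n + 1) c → g (Fin.castSucc ⟨i, hi⟩) < g (Fin.succ ⟨i, hi⟩))) ↔
        toLex (g (Fin.castSucc ⟨i, hi⟩), c (Fin.castSucc ⟨i, hi⟩)) <
          toLex (g (Fin.succ ⟨i, hi⟩), c (Fin.succ ⟨i, hi⟩)) := by
      have hdes : i ∈ desSet (n + 1) c ↔ c (Fin.succ ⟨i, hi⟩) < c (Fin.castSucc ⟨i, hi⟩) :=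
        ⟨fun ⟨_, h⟩ ↦ h, fun h ↦ ⟨Nat.succ_lt_succ hi, h⟩⟩
      have hne : c (Fin.castSucc ⟨i, hi⟩) ≠ c (Fin.succ ⟨i, hi⟩) :=
        hc.ne Fin.castSucc_lt_succ.ne
      rw [hdes, Prod.Lex.toLex_lt_toLex]
      grind
    rw [Fin.strictMono_iff_lt_succ, Fin.forall_iff]
    exact forall_congr' fun i ↦
      forall_prop_congr (fun hi ↦ lt_succ_iff (Nat.lt_of_succ_lt_succ hi)) Nat.succ_lt_succ_iff

lemma funF_desSet {n : ℕ} {c : Fin n → Fin n} (hc : Injective c) :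
    funF n (desSet n c) =
      wordSeries ({g | StrictMono fun i ↦ toLex (g i, c i)}.indicator (1 : (Fin n → ℕ) → ℚ)) := by
  ext d
  rw [coeff_wordSeries_indicator]
  refine congrArg Nat.cast (Nat.card_congr (Equiv.subtypeEquivRight fun g ↦ ?_))
  rw [adjacent_lt_iff_strictMono_toLex hc, Set.mem_ofPred_eq, eq_comm (a := wordContent g),
    Finsupp.ext_iff]
  simp only [wordContent_apply]

section Itinerary

variable {α β ι : Type*} {τ : Perm α} {w : α → β}

/-- The infinite word read by `w` along the `τ`-orbit of `a`, in the lexicographic order. For a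
cyclic shift `τ` it is the periodic extension of the rotation of `w` that starts at `a`; infinite
words are used so that `τ` acts on them by dropping the first letter. The word `w` is primitive when
its itineraries are distinct. -/
def itinerary (τ : Perm α) (w : α → β) (a : α) : Lex (ℕ → β) :=
  toLex fun k ↦ w ((τ ^ k) a)

lemma itinerary_lt_iff [LinearOrder β] {a b : α} :
    itinerary τ w a < itinerary τ w b ↔
      toLex (w a, itinerary τ w (τ a)) < toLex (w b, itinerary τ w (τ b)) := by
  rw [Prod.Lex.toLex_lt_toLex]
  constructor
  · rintro ⟨_ | k, heq, hlt⟩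
    · exact .inl hlt
    · exact .inr ⟨heq 0 k.succ_pos, k, fun j hj ↦ heq (j + 1) (Nat.succ_lt_succ hj), hlt⟩
  · rintro (hlt | ⟨heq, k, heqs, hlt⟩)
    · exact ⟨0, fun j hj ↦ absurd hj j.not_lt_zero, hlt⟩
    · refine ⟨k + 1, ?_, hlt⟩
      rintro (_ | j) hj
      · exact heq
      · exact heqs j (Nat.lt_of_succ_lt_succ hj)

lemma not_forall_pow_lt_pow [Finite α] [Preorder ι] (r : α → ι) {a b : α}
    (hab : τ.SameCycle a b) : ¬ ∀ k : ℕ, r ((τ ^ k) a) < r ((τ ^ k) b) := by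
  intro h
  obtain ⟨j, rfl⟩ := hab.exists_nat_pow_eq
  -- `r` would increase forever along `a, τ ^ j a, τ ^ (2 * j) a, …`.
  have hmono : StrictMono fun i : ℕ ↦ r ((τ ^ (i * j)) a) := by
    refine strictMono_nat_of_lt_succ fun i ↦ ?_
    rw [Nat.succ_mul, pow_add, Perm.mul_apply]
    exact h (i * j)
  exact not_injective_infinite_finite (fun i : ℕ ↦ (τ ^ (i * j)) a)
    (Injective.of_comp (f := r) hmono.injective)

lemma strictMono_itinerary_comp_iff [Finite α] [LinearOrder β] [LinearOrder ι]
    (hτ : ∀ a b, τ.SameCycle a b) (e : ι ≃ α) :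
    StrictMono (itinerary τ w ∘ e) ↔
      StrictMono fun i ↦ toLex (w (e i), e.symm (τ (e i))) := by
  constructor
  · intro h i j hij
    have hlt := itinerary_lt_iff.1 (h hij)
    rw [Prod.Lex.toLex_lt_toLex] at hlt ⊢
    refine hlt.imp_right fun ⟨heq, hlt⟩ ↦ ⟨heq, h.lt_iff_lt.1 ?_⟩
    simp only [comp_apply, apply_symm_apply]
    exact hlt
  · intro h i j hij
    by_contra hle
    have lt_persists (a b : α) (hab : e.symm a < e.symm b)
        (hle : ¬ itinerary τ w a < itinerary τ w b) :
        e.symm (τ a) < e.symm (τ b) ∧ ¬ itinerary τ w (τ a) < itinerary τ w (τ b) := by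
      have hlt := h hab
      rw [itinerary_lt_iff, Prod.Lex.toLex_lt_toLex] at hle
      simp only [apply_symm_apply, Prod.Lex.toLex_lt_toLex] at hlt
      tauto
    have lt_persists_pow (k : ℕ) : e.symm ((τ ^ k) (e i)) < e.symm ((τ ^ k) (e j)) ∧
        ¬ itinerary τ w ((τ ^ k) (e i)) < itinerary τ w ((τ ^ k) (e j)) := by
      induction k with
      | zero => exact ⟨by simpa using hij, hle⟩
      | succ k ih => simpa only [pow_succ', Perm.mul_apply] using lt_persists _ _ ih.1 ih.2
    exact not_forall_pow_lt_pow e.symm (hτ _ _) fun k ↦ (lt_persists_pow k).1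

lemma eq_const_of_comp_pow_eq [Finite α] [Nonempty α] (hτ : ∀ a b, τ.SameCycle a b) {j : ℕ}
    (hj : j.Coprime (orderOf τ)) (hw : ∀ a, w ((τ ^ j) a) = w a) : w ∈ Set.range (const α) := by
  have pow_invariant {ρ : Perm α} (hρ : ∀ a, w (ρ a) = w a) (k : ℕ) (a : α) :
      w ((ρ ^ k) a) = w a := by
    induction k with
    | zero => rfl
    | succ k ih => rw [pow_succ', Perm.mul_apply, hρ, ih]
  obtain ⟨m, hm⟩ := exists_pow_eq_self_of_coprime hj
  obtain ⟨a⟩ := ‹Nonempty α›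
  refine ⟨w a, funext fun b ↦ ?_⟩
  obtain ⟨k, rfl⟩ := (hτ a b).exists_nat_pow_eq
  exact (pow_invariant (hm ▸ pow_invariant hw m) k a).symm

lemma injective_itinerary_iff_of_prime_orderOf [Finite α] (hτ : ∀ a b, τ.SameCycle a b)
    (hp : (orderOf τ).Prime) : Injective (itinerary τ w) ↔ w ∉ Set.range (const α) := by
  obtain ⟨a, ha⟩ : ∃ a, τ a ≠ a := by
    by_contra! h
    exact hp.ne_one (orderOf_eq_one_iff.2 (Perm.ext h))
  constructor
  · rintro hinj ⟨x, rfl⟩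
    exact ha (hinj rfl)
  · intro hw a b hab
    by_contra hne
    obtain ⟨j, hj, rfl⟩ := (hτ a b).exists_pow_eq'
    have hj0 : j ≠ 0 := by
      rintro rfl
      exact hne rfl
    have : Nonempty α := ⟨a⟩
    refine hw (eq_const_of_comp_pow_eq hτ (Nat.coprime_of_lt_prime hj0 hj hp).symm fun b ↦ ?_)
    obtain ⟨k, rfl⟩ := (hτ a b).exists_nat_pow_eq
    have hk : w ((τ ^ k) a) = w ((τ ^ k) ((τ ^ j) a)) := congrFun (congrArg ofLex hab) k
    rw [hk, ← Perm.mul_apply, ← Perm.mul_apply, ← pow_add, ← pow_add, add_comm]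

end Itinerary

lemma sum_indicator_strictMono_comp_perm {n : ℕ} {γ R : Type*} [LinearOrder γ]
    [AddCommMonoidWithOne R] (f : Fin n → γ) :
    ∑ e : Perm (Fin n), {h | StrictMono h}.indicator (1 : (Fin n → γ) → R) (f ∘ e) =
      {h | Injective h}.indicator (1 : (Fin n → γ) → R) f := by
  classical
  simp only [Set.indicator_apply, Set.mem_ofPred_eq, Pi.one_apply]
  split_ifs with hf
  · have hsort : StrictMono (f ∘ Tuple.sort f) :=
      (Tuple.monotone_sort f).strictMono_of_injective (hf.comp (Tuple.sort f).injective)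
    rw [Finset.sum_eq_single_of_mem (Tuple.sort f) (Finset.mem_univ _), if_pos hsort]
    intro e _ hne
    refine if_neg fun he ↦ hne (Equiv.ext fun i ↦ hf ?_)
    exact congrFun (Tuple.unique_monotone he.monotone hsort.monotone) i
  · refine Finset.sum_eq_zero fun e _ ↦ if_neg fun he ↦ hf ?_
    exact (e.injective_comp f).1 he.injective

section Conjugation

variable {G M : Type*} [Group G]

lemma card_conj_eq_of_isConj {g c : G} (h : IsConj g c) :
    Nat.card {x // x⁻¹ * g * x = c} = Nat.card (Subgroup.centralizer {g}) := by
  obtain ⟨y, rfl⟩ := isConj_iff.1 h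
  refine Nat.card_congr ((Equiv.mulRight y).subtypeEquiv fun x ↦ ?_)
  rw [Subgroup.mem_centralizer_singleton_iff, coe_mulRight, mul_assoc, inv_mul_eq_iff_eq_mul,
    ← mul_assoc, ← mul_assoc, eq_mul_inv_iff_mul_eq, mul_assoc, eq_comm]

open Classical in
lemma sum_conj_eq_card_centralizer_nsmul [Fintype G] [AddCommMonoid M] (g : G) (f : G → M) :
    ∑ x, f (x⁻¹ * g * x) =
      Nat.card (Subgroup.centralizer {g}) • ∑ c, if IsConj g c then f c else 0 := by
  rw [← Finset.sum_fiberwise' Finset.univ (fun x ↦ x⁻¹ * g * x) f, Finset.smul_sum]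
  refine Finset.sum_congr rfl fun c _ ↦ ?_
  rw [Finset.sum_const, ← Fintype.card_subtype, ← Nat.card_eq_fintype_card]
  split_ifs with h
  · rw [card_conj_eq_of_isConj h]
  · have : IsEmpty {x // x⁻¹ * g * x = c} :=
      ⟨fun ⟨x, hx⟩ ↦ h (isConj_iff.2 ⟨x⁻¹, by rwa [inv_inv]⟩)⟩
    rw [Nat.card_of_isEmpty, zero_smul, smul_zero]

end Conjugation

section FullCycle

variable {α : Type*} [Fintype α] [DecidableEq α] {τ : Perm α}

lemma cycleType_eq_singleton_card_iff :
    τ.cycleType = {Fintype.card α} ↔ τ.IsCycle ∧ ∀ x, τ x ≠ x := by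
  constructor
  · intro h
    refine ⟨Perm.card_cycleType_eq_one.1 (by simp [h]), fun x ↦ ?_⟩
    have hcard : τ.support.card = Fintype.card α := by
      rw [← Perm.sum_cycleType, h, Multiset.sum_singleton]
    rw [← Perm.mem_support, (Finset.card_eq_iff_eq_univ _).1 hcard]
    exact Finset.mem_univ x
  · rintro ⟨hcycle, hne⟩
    rw [hcycle.cycleType, Finset.eq_univ_of_forall fun x ↦ Perm.mem_support.2 (hne x),
      Finset.card_univ]

lemma card_centralizer_of_cycleType_eq (hτ : τ.cycleType = {Fintype.card α}) :
    Nat.card (Subgroup.centralizer {τ}) = Fintype.card α := by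
  simp [Perm.nat_card_centralizer, hτ]

lemma sameCycle_of_cycleType_eq (hτ : τ.cycleType = {Fintype.card α}) (a b : α) :
    τ.SameCycle a b :=
  have ⟨hcycle, hne⟩ := cycleType_eq_singleton_card_iff.1 hτ
  hcycle.sameCycle (hne a) (hne b)

end FullCycle

open Classical in
theorem nsmul_sum_funF_cycles_eq_wordSeries {n : ℕ} {τ : Perm (Fin n)}
    (hτ : τ.cycleType = {n}) :
    n • (∑ c : Perm (Fin n),
        if c.IsCycle ∧ ∀ x, c x ≠ x then funF n (desSet n c) else 0) =
      wordSeries ({w : Fin n → ℕ | Injective (itinerary τ w)}.indicator 1) := by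
  have isConj_iff_isCycle (c : Perm (Fin n)) : IsConj τ c ↔ c.IsCycle ∧ ∀ x, c x ≠ x := by
    rw [← cycleType_eq_singleton_card_iff, Fintype.card_fin, Perm.isConj_iff_cycleType_eq, hτ,
      eq_comm]
  have same_cycle : ∀ a b, τ.SameCycle a b :=
    sameCycle_of_cycleType_eq (by rwa [Fintype.card_fin])
  have card_centralizer : Nat.card (Subgroup.centralizer {τ}) = n := by
    rw [card_centralizer_of_cycleType_eq, Fintype.card_fin]
    rwa [Fintype.card_fin]
  have funF_conj (e : Perm (Fin n)) : funF n (desSet n (e⁻¹ * τ * e : Perm (Fin n))) =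
      wordSeries fun w ↦ {f | StrictMono f}.indicator 1 (itinerary τ w ∘ e) := by
    rw [funF_desSet (Equiv.injective _), ← wordSeries_comp_equiv e]
    congr 1 with w
    simp only [Set.indicator_apply, Set.mem_ofPred_eq, strictMono_itinerary_comp_iff same_cycle e]
    rfl
  calc
    _ = ∑ e : Perm (Fin n), funF n (desSet n (e⁻¹ * τ * e : Perm (Fin n))) := by
      simp only [sum_conj_eq_card_centralizer_nsmul τ fun c : Perm (Fin n) ↦ funF n (desSet n c),
        card_centralizer, isConj_iff_isCycle]
    _ = wordSeries (∑ e : Perm (Fin n), fun w ↦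
          {f | StrictMono f}.indicator 1 (itinerary τ w ∘ e)) := by
      simp only [funF_conj, map_sum]
    _ = _ := by
      congr 1 with w
      rw [Finset.sum_apply, sum_indicator_strictMono_comp_perm]
      rfl

open Classical in
/-- For `n` prime, `(p₁ⁿ − pₙ)/n` equals the sum of `F_{Des c}`
over all cyclic permutations `c` of `Fin n` (single `n`-cycles, i.e. cycles with
full support). -/
theorem powerSum_div_eq_sum_cycles (n : ℕ) [NeZero n] (hn : n.Prime) :
    (n : ℚ)⁻¹ • (powerSum 1 ^ n - powerSum n) =
      ∑ c : Equiv.Perm (Fin n),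
        if c.IsCycle ∧ ∀ x, c x ≠ x then funF n (desSet n ⇑c) else 0 := by
  have hτ : (finRotate n).cycleType = {n} := cycleType_finRotate_of_le hn.two_le
  have horder : orderOf (finRotate n) = n := by
    rw [← Perm.lcm_cycleType, hτ, Multiset.lcm_singleton, normalize_eq]
  have primitive_eq : {w : Fin n → ℕ | Injective (itinerary (finRotate n) w)} =
      (Set.range (const (Fin n)))ᶜ :=
    Set.ext fun w ↦ injective_itinerary_iff_of_prime_orderOf
      (sameCycle_of_cycleType_eq (by rwa [Fintype.card_fin])) (horder.symm ▸ hn)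
  have hone := powerSum_one_pow_card (Fin n)
  have hcard := powerSum_card (Fin n)
  rw [Fintype.card_fin] at hone hcard
  rw [inv_smul_eq_iff₀ (Nat.cast_ne_zero.2 hn.ne_zero), Nat.cast_smul_eq_nsmul,
    nsmul_sum_funF_cycles_eq_wordSeries hτ, primitive_eq, Set.indicator_compl, map_sub, hone,
    hcard]
end

section
/- Let H = (V,E) be a hypertree such that |e| is prime for each edge e ∈ E. Then the chromatic symmetric function X_H is F-positive: all coefficients in its expansion in the basis of fundamental quasisymmetric functions are nonnegative. -/
/-- A path in the hypergraph with edge set `E`: a sequence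
`v₀, e₀, v₁, e₁, …, e_{m-1}, v_m` with distinct edges `eᵢ ∈ E`, distinct vertices
(except that the first and last vertex may coincide), and `vᵢ, vᵢ₊₁ ∈ eᵢ`. -/
structure HPath {V : Type} (E : Set (Set V)) where
  m : ℕ
  vert : Fin (m + 1) → V
  edge : Fin m → Set V
  edge_mem : ∀ i, edge i ∈ E
  edge_inj : Function.Injective edge
  vert_almost_inj : ∀ i j : Fin (m + 1), vert i = vert j →
    i = j ∨ (i = 0 ∧ j = Fin.last m) ∨ (j = 0 ∧ i = Fin.last m)
  mem_left : ∀ i : Fin m, vert i.castSucc ∈ edge i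
  mem_right : ∀ i : Fin m, vert i.succ ∈ edge i

/-- The first vertex of a path. -/
def HPath.first {V : Type} {E : Set (Set V)} (p : HPath E) : V := p.vert 0

/-- The last vertex of a path. -/
def HPath.last {V : Type} {E : Set (Set V)} (p : HPath E) : V := p.vert (Fin.last p.m)

/-- A cycle is a path with `v₀ = v_m` and more than one edge. -/
def HPath.IsCycle {V : Type} {E : Set (Set V)} (p : HPath E) : Prop :=
  p.first = p.last ∧ 1 < p.m

/-- The hypergraph with edge set `E` is connected on the vertex set `W`. -/
def ConnectedOn {V : Type} (W : Set V) (E : Set (Set V)) : Prop :=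
  ∀ v ∈ W, ∀ v' ∈ W, ∃ p : HPath E, p.first = v ∧ p.last = v'

/-- `(W, E)` is a hypertree: every edge is a subset of `W` of size at least 2,
the hypergraph is connected on `W`, and it has no cycles. -/
def IsHypertreeOn {V : Type} (W : Set V) (E : Set (Set V)) : Prop :=
  (∀ e ∈ E, e ⊆ W ∧ 2 ≤ e.ncard) ∧ ConnectedOn W E ∧ ∀ p : HPath E, ¬ p.IsCycle

/-- The chromatic symmetric function of the hypergraph with edge set `E` on the
finite vertex type `V`: the coefficient of a monomial `d` is the number of colorings
`χ : V → ℕ` with no edge monochromatic and content `d`. -/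
noncomputable def chromSym {V : Type} [Fintype V] (E : Set (Set V)) :
    MvPowerSeries ℕ ℚ :=
  fun d => (Nat.card {χ : V → ℕ //
    (∀ e ∈ E, ¬ ∃ a, ∀ v ∈ e, χ v = a) ∧
    ∀ j : ℕ, d j = Nat.card {v : V // χ v = j}} : ℚ)

/-!
On each edge `e` fix a cyclic permutation `σ e`, and attach to a coloring `χ` and a vertex `u ∈ e`
the word `χ u, χ (σ e u), χ (σ e (σ e u)), …`. Since `|e|` is prime, `χ` is nonconstant on `e` if
and only if the words of distinct vertices of `e` are distinct, so that a proper coloring orders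
each edge lexicographically. As there are no cycles, any choice of linear orders on the edges
extends to a linear order of `V`. Hence every numbering `π` of `V` has a tie-breaking order `ω π`,
depending only on the restrictions of `π` to the edges, which compares `u, v ∈ e` as `π` compares
`σ e u, σ e v`. If sorting `V` by color, with ties broken by `ω π`, reproduces `π`, then `π` orders
each edge by the words of `χ`. This makes `π` unique, and it exists exactly when `χ` is proper. The
colorings that lead to a given `π` are counted by the fundamental quasisymmetric function of the
descent set of `ω π` read along `π`.
-/

section Numbering

variable {V : Type*}

theorem exists_numbering_lt_iff [Fintype V] {α : Type*} [LinearOrder α] {f : V → α}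
    (hf : Function.Injective f) : ∃ π : Numbering V, ∀ u v, π u < π v ↔ f u < f v := by
  let _ : LinearOrder V := LinearOrder.lift' f hf
  exact ⟨(monoEquivOfFin V rfl).symm.toEquiv, fun _ _ => (monoEquivOfFin V rfl).symm.lt_iff_lt⟩

theorem numbering_ext [Fintype V] {π π' : Numbering V} (h : ∀ u v, π u < π v ↔ π' u < π' v) :
    π = π' := by
  have hmono : StrictMono (π.symm.trans π') := fun s t hst => (h _ _).mp (by simpa using hst)
  have hrefl : hmono.orderIsoOfSurjective _ (Equiv.surjective _) = OrderIso.refl _ :=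
    Subsingleton.elim _ _
  ext v
  simpa using congrArg Fin.val (DFunLike.congr_fun hrefl (π v)).symm

/-- The functions `f` and `g` compare any two elements of `s` in the same way. -/
def SameOrderOn {α β : Type*} [LT α] [LT β] (f : V → α) (g : V → β) (s : Set V) : Prop :=
  ∀ ⦃u⦄, u ∈ s → ∀ ⦃v⦄, v ∈ s → (f u < f v ↔ g u < g v)

namespace SameOrderOn

variable {α β γ : Type*} {s : Set V}

theorem refl [LT α] (f : V → α) (s : Set V) : SameOrderOn f f s := fun _ _ _ _ => Iff.rfl

theorem symm [LT α] [LT β] {f : V → α} {g : V → β} (h : SameOrderOn f g s) :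
    SameOrderOn g f s := fun _ hu _ hv => (h hu hv).symm

theorem trans [LT α] [LT β] [LT γ] {f : V → α} {g : V → β} {k : V → γ} (hfg : SameOrderOn f g s)
    (hgk : SameOrderOn g k s) : SameOrderOn f k s := fun _ hu _ hv => (hfg hu hv).trans (hgk hu hv)

theorem comp [LT α] [LT β] {W : Type*} {f : V → α} {g : V → β} {t : Set W} {k : W → V}
    (h : SameOrderOn f g s) (hk : Set.MapsTo k t s) : SameOrderOn (f ∘ k) (g ∘ k) t :=
  fun _ hu _ hv => h (hk hu) (hk hv)

theorem of_lt_imp_lt [LinearOrder α] [Preorder β] {f : V → α} {g : V → β} (hf : Set.InjOn f s)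
    (h : ∀ u ∈ s, ∀ v ∈ s, f u < f v → g u < g v) : SameOrderOn f g s := by
  refine fun u hu v hv => ⟨h u hu v hv, fun hlt => ?_⟩
  rcases lt_trichotomy (f u) (f v) with huv | huv | hvu
  · exact huv
  · exact absurd hlt (hf hu hv huv ▸ lt_irrefl _)
  · exact absurd hlt (h v hv u hu hvu).not_gt

end SameOrderOn

end Numbering

section ClosedSeries

variable {V : Type*} {r : SetRel V V}

/-- A closed `r`-walk of positive length, shortest among all such walks. -/
def IsShortestClosed (s : RelSeries r) : Prop :=
  MinimalFor (fun t : RelSeries r => t.head = t.last ∧ 0 < t.length) RelSeries.length s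

namespace IsShortestClosed

variable {s : RelSeries r}

theorem eq_zero_and_eq_last (hs : IsShortestClosed s) {i j : Fin (s.length + 1)} (hij : i < j)
    (h : s i = s j) : i = 0 ∧ j = Fin.last s.length := by
  by_contra hne
  have hlen : s.length ≤ i + (s.length - j) := by
    refine hs.le (j := (s.take i).smash (s.drop j) (by simpa using h)) ⟨by simp [hs.prop.1], ?_⟩
    simp only [RelSeries.smash_length, RelSeries.take_length, RelSeries.drop_length]
    simp only [Fin.ext_iff, Fin.val_zero, Fin.val_last] at hne
    omega
  omega

theorem not_rel_of_skip (hs : IsShortestClosed s) {i j : Fin s.length} (hij : i < j) :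
    (s i.castSucc, s j.succ) ∉ r := by
  intro hrel
  have hlen : s.length ≤ i + (s.length - (j + 1)) + 1 :=
    hs.le (j := (s.take i.castSucc).append (s.drop j.succ)
      (by simpa only [RelSeries.last_take, RelSeries.head_drop] using hrel))
      ⟨by simp [hs.prop.1], by simp⟩
  omega

theorem not_rel_of_return (hs : IsShortestClosed s) {i j : Fin s.length} (hij : i < j) :
    (s j.castSucc, s i.succ) ∉ r := by
  intro hrel
  let t := (s.take j.castSucc).drop ⟨i + 1, Nat.succ_lt_succ hij⟩
  have hhead : t.head = s i.succ := RelSeries.head_drop _ _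
  have hlast : t.last = s j.castSucc := by simp [t]
  have hlen : s.length ≤ j - (i + 1) + 1 :=
    hs.le (j := t.snoc (s i.succ) (hlast ▸ hrel)) ⟨by simp [hhead], Nat.succ_pos _⟩
  omega

theorem one_lt_length (hs : IsShortestClosed s) (hirr : ∀ a, (a, a) ∉ r) : 1 < s.length := by
  obtain ⟨hclosed, hpos⟩ := hs.prop
  by_contra hle
  obtain ⟨n, f, step⟩ := s
  obtain rfl : n = 1 := le_antisymm (not_lt.mp hle) hpos
  exact hirr (f 0) (by simpa [← show f 0 = f 1 from hclosed] using step 0)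

end IsShortestClosed

theorem exists_numbering_of_no_closed_series [Fintype V]
    (hr : ∀ s : RelSeries r, s.head = s.last → s.length = 0) :
    ∃ π : Numbering V, ∀ u v, (u, v) ∈ r → π u < π v := by
  let _ : PartialOrder V :=
    { le := fun a b => ∃ s : RelSeries r, s.head = a ∧ s.last = b
      le_refl := fun a => ⟨RelSeries.singleton r a, by simp⟩
      le_trans := by
        rintro a b c ⟨s, rfl, rfl⟩ ⟨t, ht, rfl⟩
        exact ⟨s.smash t ht.symm, by simp⟩
      le_antisymm := by
        rintro a b ⟨s, rfl, rfl⟩ ⟨t, hst, hts⟩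
        have hlen : (s.smash t hst.symm).length = 0 := hr _ (by simp [hts])
        rw [RelSeries.smash_length] at hlen
        exact s.subsingleton_of_length_eq_zero (by omega) s.head_mem s.last_mem }
  obtain ⟨π, hπ⟩ := exists_numbering_lt_iff
    (f := (toLinearExtension : V →o LinearExtension V)) Function.injective_id
  refine ⟨π, fun u v huv => (hπ u v).mpr ?_⟩
  let s := (RelSeries.singleton r u).snoc v huv
  have hle : u ≤ v := ⟨s, RelSeries.head_snoc _ _ _, RelSeries.last_snoc _ _ _⟩
  refine (toLinearExtension.monotone hle).lt_of_ne fun heq => ?_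
  obtain rfl : u = v := heq
  exact absurd (hr s ((RelSeries.head_snoc _ _ _).trans (RelSeries.last_snoc _ _ _).symm))
    (Nat.succ_ne_zero _)

end ClosedSeries

section Acyclic

variable {V : Type} {α : Type*} [LinearOrder α] {E : Set (Set V)} {f : Set V → V → α}

/-- Two vertices are related if some edge `e ∈ E` contains both of them and `f e` is smaller at the
first one. -/
def edgeLT (E : Set (Set V)) (f : Set V → V → α) : SetRel V V :=
  {p | ∃ e ∈ E, p.1 ∈ e ∧ p.2 ∈ e ∧ f e p.1 < f e p.2}

theorem exists_isCycle_of_isShortestClosed {s : RelSeries (edgeLT E f)} (hs : IsShortestClosed s) :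
    ∃ p : HPath E, p.IsCycle := by
  choose e he hleft hright hlt using s.step
  have hne : ∀ i j, i < j → e i ≠ e j := by
    intro i j hij heq
    have hleft' := heq ▸ hleft j
    have hright' := heq ▸ hright j
    have hlt' := heq ▸ hlt j
    rcases lt_or_ge (f (e i) (s i.castSucc)) (f (e i) (s j.succ)) with hskip | hreturn
    · exact hs.not_rel_of_skip hij ⟨e i, he i, hleft i, hright', hskip⟩
    · exact hs.not_rel_of_return hij
        ⟨e i, he i, hleft', hright i, hlt'.trans_le (hreturn.trans (hlt i).le)⟩
  refine ⟨⟨s.length, s, e, he, .of_lt_imp_ne hne, fun i j hij => ?_, hleft, hright⟩,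
    hs.prop.1, hs.one_lt_length fun a ⟨_, _, _, _, hlt⟩ => lt_irrefl _ hlt⟩
  rcases lt_trichotomy i j with hlt | heq | hgt
  · exact .inr (.inl (hs.eq_zero_and_eq_last hlt hij))
  · exact .inl heq
  · exact .inr (.inr (hs.eq_zero_and_eq_last hgt hij.symm))

theorem exists_numbering_sameOrderOn [Fintype V] (hE : ∀ p : HPath E, ¬ p.IsCycle)
    (hf : ∀ e ∈ E, Set.InjOn (f e) e) :
    ∃ π : Numbering V, ∀ e ∈ E, SameOrderOn π (f e) e := by
  obtain ⟨π, hπ⟩ := exists_numbering_of_no_closed_series (r := edgeLT E f) fun s hclosed => by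
    by_contra hlen
    obtain ⟨t, ht⟩ := exists_minimalFor_of_wellFoundedLT
      (fun t : RelSeries (edgeLT E f) => t.head = t.last ∧ 0 < t.length) RelSeries.length
      ⟨s, hclosed, Nat.pos_of_ne_zero hlen⟩
    obtain ⟨p, hp⟩ := exists_isCycle_of_isShortestClosed ht
    exact hE p hp
  exact ⟨π, fun e he => (SameOrderOn.of_lt_imp_lt (hf e he)
    fun u hu v hv huv => hπ u v ⟨e, he, hu, hv, huv⟩).symm⟩

end Acyclic

section CycleWord

open Equiv

variable {V α : Type*} {f : Perm V} {χ : V → α} {s : Set V}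

/-- The infinite word of `χ`-values along the orbit of `u` under `f`, ordered lexicographically. -/
def cycleWord (f : Perm V) (χ : V → α) (u : V) : Lex (ℕ → α) := toLex fun k => χ ((f ^ k) u)

theorem toLex_lt_toLex_iff_head_tail [LinearOrder α] {x y : ℕ → α} :
    toLex x < toLex y ↔ x 0 < y 0 ∨
      x 0 = y 0 ∧ toLex (fun k => x (k + 1)) < toLex (fun k => y (k + 1)) := by
  constructor
  · rintro ⟨_ | k, heq, hlt⟩
    · exact .inl hlt
    · exact .inr ⟨heq 0 k.succ_pos, k, fun j hj => heq (j + 1) (Nat.succ_lt_succ hj), hlt⟩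
  · rintro (hlt | ⟨h0, k, heq, hlt⟩)
    · exact ⟨0, fun j hj => absurd hj j.not_lt_zero, hlt⟩
    · refine ⟨k + 1, fun j hj => ?_, hlt⟩
      cases j with
      | zero => exact h0
      | succ j => exact heq j (Nat.lt_of_succ_lt_succ hj)

theorem cycleWord_lt_cycleWord_iff [LinearOrder α] {u v : V} :
    cycleWord f χ u < cycleWord f χ v ↔
      χ u < χ v ∨ χ u = χ v ∧ cycleWord f χ (f u) < cycleWord f χ (f v) :=
  toLex_lt_toLex_iff_head_tail

theorem cycleWord_injOn (hf : f.IsCycleOn s) (hs : s.ncard.Prime)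
    (hχ : ¬ ∃ a, ∀ v ∈ s, χ v = a) : Set.InjOn (cycleWord f χ) s := by
  lift s to Finset V using Set.finite_of_ncard_pos hs.pos
  rw [Set.ncard_coe_finset] at hs
  intro u hu v hv heq
  by_contra huv
  obtain ⟨m, hm, rfl⟩ := hf.exists_pow_eq hu hv
  have hm0 : 0 < m := Nat.pos_of_ne_zero fun h => huv (by simp [h])
  have hperiod : ∀ k, χ ((f ^ (k * m)) u) = χ u := by
    intro k
    induction k with
    | zero => simp
    | succ k ih =>
      rw [Nat.succ_mul, pow_add, Perm.mul_apply, ← ih]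
      exact (congrFun (toLex.injective heq) (k * m)).symm
  refine hχ ⟨χ u, fun w hw => ?_⟩
  obtain ⟨j, -, rfl⟩ := hf.exists_pow_eq hu hw
  obtain ⟨k, -, hk⟩ := Nat.exists_mul_mod_eq_of_coprime j
    (Nat.coprime_of_lt_prime hm0.ne' hm hs).symm hs.ne_zero
  have hpow : (f ^ j) u = (f ^ (k * m)) u :=
    (hf.pow_apply_eq_pow_apply hu).mpr ((mul_comm k m ▸ hk : k * m % _ = _).symm)
  rw [hpow, hperiod]

theorem exists_pow_apply_le [LinearOrder α] (hf : f.IsCycleOn s) (hs : s.Finite) {u v : V}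
    (hu : u ∈ s) (hv : v ∈ s) (g : V → α) : ∃ k : ℕ, g ((f ^ k) v) ≤ g ((f ^ k) u) := by
  obtain ⟨w, hw, hmax⟩ := Set.exists_max_image s g hs ⟨u, hu⟩
  obtain ⟨k, -, rfl⟩ := hf.exists_pow_eq' hs hu hw
  exact ⟨k, hmax _ ((hf.1.perm_pow k).mapsTo hv)⟩

/-- The recursion alone would also allow two elements to be compared forever without a difference in
color; finiteness of the orbit rules this out. -/
theorem sameOrderOn_cycleWord {β : Type*} [LinearOrder α] [LinearOrder β] {g : V → β}
    (hf : f.IsCycleOn s) (hs : s.Finite) (hg : Set.InjOn g s)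
    (hrec : ∀ u ∈ s, ∀ v ∈ s, g u < g v ↔ χ u < χ v ∨ χ u = χ v ∧ g (f u) < g (f v)) :
    SameOrderOn g (cycleWord f χ) s := by
  refine .of_lt_imp_lt hg fun u hu v hv huv => ?_
  by_contra hword
  have hpow : ∀ k : ℕ, g ((f ^ k) u) < g ((f ^ k) v) ∧
      ¬ cycleWord f χ ((f ^ k) u) < cycleWord f χ ((f ^ k) v) := by
    intro k
    induction k with
    | zero => exact ⟨huv, hword⟩
    | succ k ih =>
      have hmem : ∀ w ∈ s, (f ^ k) w ∈ s := fun w hw => (hf.1.perm_pow k).mapsTo hw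
      rw [hrec _ (hmem u hu) _ (hmem v hv), cycleWord_lt_cycleWord_iff] at ih
      simp only [pow_succ', Perm.mul_apply]
      tauto
  obtain ⟨k, hk⟩ := exists_pow_apply_le hf hs hu hv g
  exact hk.not_gt (hpow k).1

end CycleWord

section Standardization

variable {V α κ : Type*}

/-- `π` is the standardization of the coloring `χ` with ties broken by `w`: it numbers the elements
of `V` by increasing color, and those of equal color by increasing `w`. -/
def IsStandardization {n : ℕ} [LT κ] [LT α] (χ : V → κ) (w : V → α) (π : V ≃ Fin n) : Prop :=
  ∀ u v, π u < π v ↔ χ u < χ v ∨ χ u = χ v ∧ w u < w v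

theorem exists_isStandardization [Fintype V] [LinearOrder κ] [LinearOrder α] (χ : V → κ)
    {w : V → α} (hw : Function.Injective w) :
    ∃ π : Numbering V, IsStandardization χ w π := by
  obtain ⟨π, hπ⟩ := exists_numbering_lt_iff (f := fun v => toLex (χ v, w v))
    fun u v h => hw (congrArg Prod.snd (toLex.injective h))
  exact ⟨π, fun u v => (hπ u v).trans Prod.Lex.toLex_lt_toLex⟩

theorem IsStandardization.unique [Fintype V] [LT κ] [LT α] {χ : V → κ} {w : V → α}
    {π π' : Numbering V} (h : IsStandardization χ w π) (h' : IsStandardization χ w π') :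
    π = π' :=
  numbering_ext fun u v => (h u v).trans (h' u v).symm

/-- The descent positions of a sequence, 0-indexed. -/
def descentSet {n : ℕ} [LinearOrder α] (a : Fin n → α) : Finset ℕ :=
  {i ∈ Finset.range (n - 1) | ∃ h : i + 1 < n, a ⟨i + 1, h⟩ < a ⟨i, Nat.lt_of_succ_lt h⟩}

theorem mem_descentSet {n : ℕ} [LinearOrder α] {a : Fin n → α} {i : ℕ} (h : i + 1 < n) :
    i ∈ descentSet a ↔ a ⟨i + 1, h⟩ < a ⟨i, Nat.lt_of_succ_lt h⟩ := by
  simp [descentSet, h, Nat.lt_sub_of_add_lt h]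

theorem fin_strictMono_iff_lt_succ {n : ℕ} [Preorder α] {a : Fin n → α} :
    StrictMono a ↔ ∀ i (h : i + 1 < n), a ⟨i, Nat.lt_of_succ_lt h⟩ < a ⟨i + 1, h⟩ := by
  cases n with
  | zero => simp [StrictMono]
  | succ n =>
    rw [Fin.strictMono_iff_lt_succ, Fin.forall_iff]
    simp only [Nat.add_lt_add_iff_right]
    rfl

theorem isStandardization_iff_strictMono {n : ℕ} [LinearOrder κ] [LinearOrder α] {χ : V → κ}
    {w : V → α} {π : V ≃ Fin n} : IsStandardization χ w π ↔
      StrictMono fun t => toLex (χ (π.symm t), w (π.symm t)) := by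
  constructor
  · intro h s t hst
    rw [Prod.Lex.toLex_lt_toLex, ← h, π.apply_symm_apply, π.apply_symm_apply]
    exact hst
  · intro h u v
    rw [← h.lt_iff_lt, Prod.Lex.toLex_lt_toLex]
    simp only [π.symm_apply_apply]

theorem isStandardization_comp_iff {n : ℕ} [LinearOrder κ] [LinearOrder α] {w : V → α}
    (hw : Function.Injective w) {π : V ≃ Fin n} {g : Fin n → κ} : IsStandardization (g ∘ π) w π ↔
      ∀ i : ℕ, ∀ h : i + 1 < n, g ⟨i, Nat.lt_of_succ_lt h⟩ ≤ g ⟨i + 1, h⟩ ∧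
        (i ∈ descentSet (w ∘ π.symm) → g ⟨i, Nat.lt_of_succ_lt h⟩ < g ⟨i + 1, h⟩) := by
  rw [isStandardization_iff_strictMono, fin_strictMono_iff_lt_succ]
  refine forall₂_congr fun i h => ?_
  have hne : w (π.symm ⟨i, Nat.lt_of_succ_lt h⟩) ≠ w (π.symm ⟨i + 1, h⟩) := by
    simp [hw.eq_iff]
  simp only [Prod.Lex.toLex_lt_toLex, mem_descentSet h, Function.comp_apply, π.apply_symm_apply]
  grind

theorem funF_descentSet_apply [LinearOrder α] {n : ℕ} {w : V → α} (hw : Function.Injective w)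
    (π : V ≃ Fin n) (d : ℕ →₀ ℕ) :
    funF n (descentSet (w ∘ π.symm)) d = Nat.card {χ : V → ℕ //
      IsStandardization χ w π ∧ ∀ j, d j = Nat.card {v : V // χ v = j}} := by
  refine congrArg Nat.cast (Nat.card_congr
    ((π.symm.arrowCongr (Equiv.refl ℕ)).subtypeEquiv fun g => and_congr ?_ ?_))
  · exact (isStandardization_comp_iff hw).symm
  · exact forall_congr' fun j => Eq.congr_right
      (Nat.card_congr (π.symm.subtypeEquiv fun t => by simp))

end Standardization

section Counting

theorem finite_setOf_content {V : Type*} [Finite V] (d : ℕ →₀ ℕ) :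
    {χ : V → ℕ | ∀ j, d j = Nat.card {v : V // χ v = j}}.Finite := by
  refine (Set.Finite.pi' fun _ : V => d.support.finite_toSet).subset fun χ hχ v => ?_
  have : Nonempty {u : V // χ u = χ v} := ⟨⟨v, rfl⟩⟩
  rw [Finset.mem_coe, Finsupp.mem_support_iff, hχ (χ v)]
  exact Nat.card_pos.ne'

theorem card_subtype_eq_sum {ι α : Type*} [Fintype ι] {P : α → Prop} {Q : ι → α → Prop}
    [∀ i, Finite {a // Q i a}] (hPQ : ∀ a, P a ↔ ∃ i, Q i a)
    (hunique : ∀ a i j, Q i a → Q j a → i = j) :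
    Nat.card {a // P a} = ∑ i, Nat.card {a // Q i a} := by
  rw [← Nat.card_sigma]
  refine (Nat.card_congr (Equiv.ofBijective (fun x => ⟨x.2.1, (hPQ _).mpr ⟨x.1, x.2.2⟩⟩)
    ⟨?_, ?_⟩)).symm
  · rintro ⟨i, a, hi⟩ ⟨j, b, hj⟩ hab
    obtain rfl : a = b := congrArg Subtype.val hab
    obtain rfl := hunique a i j hi hj
    rfl
  · rintro ⟨a, ha⟩
    obtain ⟨i, hi⟩ := (hPQ a).mp ha
    exact ⟨⟨i, a, hi⟩, rfl⟩

variable {V : Type} [Fintype V] {E : Set (Set V)}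

/-- A proper coloring of the hypergraph with edge set `E`: no edge is monochromatic. -/
def IsProperColoring (E : Set (Set V)) (χ : V → ℕ) : Prop := ∀ e ∈ E, ¬ ∃ a, ∀ v ∈ e, χ v = a

theorem chromSym_eq_sum_funF [DecidableEq V] {α : Type*} [LinearOrder α] {ω : Numbering V → V → α}
    (hω : ∀ π, Function.Injective (ω π))
    (hproper : ∀ χ : V → ℕ, IsProperColoring E χ ↔ ∃ π, IsStandardization χ (ω π) π)
    (hunique : ∀ (χ : V → ℕ) (π π' : Numbering V),
      IsStandardization χ (ω π) π → IsStandardization χ (ω π') π' → π = π') :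
    chromSym E = ∑ π, funF (Fintype.card V) (descentSet (ω π ∘ π.symm)) := by
  refine MvPowerSeries.ext fun d => ?_
  rw [map_sum]
  change chromSym E d = ∑ π, funF (Fintype.card V) (descentSet (ω π ∘ π.symm)) d
  simp only [funF_descentSet_apply (hω _)]
  have (π : Numbering V) : Finite {χ : V → ℕ // IsStandardization χ (ω π) π ∧
      ∀ j, d j = Nat.card {v : V // χ v = j}} :=
    (finite_setOf_content d).subset fun _ hχ => hχ.2
  rw [← Nat.cast_sum, ← card_subtype_eq_sum (P := fun χ => IsProperColoring E χ ∧
    ∀ j, d j = Nat.card {v : V // χ v = j})]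
  · rfl
  · exact fun χ => by rw [hproper, exists_and_right]
  · exact fun χ π π' h h' => hunique χ π π' h.1 h'.1

theorem exists_nonneg_sum_smul_funF {ι : Type*} [Fintype ι] (n : ℕ) {D : ι → Finset ℕ}
    (hD : ∀ i, D i ⊆ Finset.range (n - 1)) :
    ∃ a : Finset ℕ → ℚ, (∀ S, 0 ≤ a S) ∧
      ∑ i, funF n (D i) = ∑ S ∈ (Finset.range (n - 1)).powerset, a S • funF n S := by
  refine ⟨fun S => ({i | D i = S} : Finset ι).card, fun S => Nat.cast_nonneg _, ?_⟩
  rw [← Finset.sum_fiberwise_of_maps_to' (fun i _ => Finset.mem_powerset.mpr (hD i))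
    (fun S : Finset ℕ => funF n S)]
  simp only [Finset.sum_const, Nat.cast_smul_eq_nsmul]

end Counting

section TieBreak

open Equiv

variable {V : Type} [Fintype V] {E : Set (Set V)} {σ : Set V → Perm V}
  {ω : Numbering V → Numbering V}

/-- The order `ω π` compares `u` and `v` in an edge `e` as `π` compares `σ e u` and `σ e v`, and it
depends only on the restrictions of `π` to the edges. -/
structure IsTieBreak (E : Set (Set V)) (σ : Set V → Perm V) (ω : Numbering V → Numbering V) :
    Prop where
  sameOrderOn : ∀ π : Numbering V, ∀ e ∈ E, SameOrderOn (ω π) (π ∘ σ e) e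
  congr : ∀ π π' : Numbering V, (∀ e ∈ E, SameOrderOn π π' e) → ω π = ω π'

theorem exists_isTieBreak (hE : ∀ p : HPath E, ¬ p.IsCycle)
    (hσ : ∀ e ∈ E, Set.MapsTo (σ e) e e) : ∃ ω, IsTieBreak E σ ω := by
  let agree : Setoid (Numbering V) :=
    { r := fun π π' => ∀ e ∈ E, SameOrderOn π π' e
      iseqv :=
        { refl := fun π e _ => .refl π e
          symm := fun h e he => (h e he).symm
          trans := fun h h' e he => (h e he).trans (h' e he) } }
  have hshift (π : Numbering V) : ∃ ω : Numbering V, ∀ e ∈ E, SameOrderOn ω (π ∘ σ e) e :=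
    exists_numbering_sameOrderOn hE fun e _ => (π.injective.comp (σ e).injective).injOn
  choose ω hω using hshift
  refine ⟨fun π => ω (Quotient.mk agree π).out, fun π e he => ?_, fun π π' h => ?_⟩
  · exact (hω _ e he).trans ((Quotient.mk_out (s := agree) π e he).comp (hσ e he))
  · exact congrArg (fun q => ω q.out) (Quotient.sound (s := agree) h)

namespace IsTieBreak

variable {χ : V → ℕ} {π π' : Numbering V}

theorem sameOrderOn_cycleWord (hω : IsTieBreak E σ ω) {e : Set V} (he : e ∈ E)
    (hσ : (σ e).IsCycleOn e) (hπ : IsStandardization χ (ω π) π) :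
    SameOrderOn π (cycleWord (σ e) χ) e :=
  _root_.sameOrderOn_cycleWord hσ e.toFinite π.injective.injOn fun u hu v hv => by
    rw [hπ, hω.sameOrderOn π e he hu hv]
    rfl

theorem isProperColoring (hω : IsTieBreak E σ ω) (hσ : ∀ e ∈ E, (σ e).IsCycleOn e)
    (hnontrivial : ∀ e ∈ E, e.Nontrivial) (hπ : IsStandardization χ (ω π) π) :
    IsProperColoring E χ := by
  rintro e he ⟨a, ha⟩
  have hword {u : V} (hu : u ∈ e) : cycleWord (σ e) χ u = toLex fun _ => a :=
    congrArg toLex (funext fun k => ha _ (((hσ e he).1.perm_pow k).mapsTo hu))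
  have hnlt {u v : V} (hu : u ∈ e) (hv : v ∈ e) : ¬ π u < π v := by
    rw [hω.sameOrderOn_cycleWord he (hσ e he) hπ hu hv, hword hu, hword hv]
    exact lt_irrefl _
  obtain ⟨u, hu, v, hv, huv⟩ := hnontrivial e he
  rcases lt_or_gt_of_ne (π.injective.ne huv) with hlt | hlt
  · exact hnlt hu hv hlt
  · exact hnlt hv hu hlt

theorem isStandardization_unique (hω : IsTieBreak E σ ω) (hσ : ∀ e ∈ E, (σ e).IsCycleOn e)
    (hπ : IsStandardization χ (ω π) π) (hπ' : IsStandardization χ (ω π') π') : π = π' := by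
  have heq : ω π = ω π' := hω.congr π π' fun e he =>
    (hω.sameOrderOn_cycleWord he (hσ e he) hπ).trans
      (hω.sameOrderOn_cycleWord he (hσ e he) hπ').symm
  exact (heq ▸ hπ).unique hπ'

theorem exists_isStandardization (hω : IsTieBreak E σ ω) (hE : ∀ p : HPath E, ¬ p.IsCycle)
    (hσ : ∀ e ∈ E, Set.MapsTo (σ e) e e)
    (hword : ∀ e ∈ E, Set.InjOn (cycleWord (σ e) χ) e) :
    ∃ π, IsStandardization χ (ω π) π := by
  obtain ⟨ρ, hρ⟩ := exists_numbering_sameOrderOn hE hword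
  obtain ⟨π, hπ⟩ := _root_.exists_isStandardization χ (ω ρ).injective
  have hagree : ∀ e ∈ E, SameOrderOn π ρ e := by
    intro e he u hu v hv
    calc π u < π v
      _ ↔ χ u < χ v ∨ χ u = χ v ∧ ρ (σ e u) < ρ (σ e v) := by
        rw [hπ, hω.sameOrderOn ρ e he hu hv]
        rfl
      _ ↔ cycleWord (σ e) χ u < cycleWord (σ e) χ v := by
        rw [hρ e he (hσ e he hu) (hσ e he hv)]
        exact cycleWord_lt_cycleWord_iff.symm
      _ ↔ ρ u < ρ v := (hρ e he hu hv).symm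
  exact ⟨π, hω.congr π ρ hagree ▸ hπ⟩

end IsTieBreak

end TieBreak

theorem hypertree_prime_F_positive_general {V : Type} [Fintype V] (E : Set (Set V))
    (hE : ∀ p : HPath E, ¬ p.IsCycle) (hp : ∀ e ∈ E, (e.ncard).Prime) :
    ∃ a : Finset ℕ → ℚ, (∀ S, 0 ≤ a S) ∧
      chromSym E = ∑ S ∈ (Finset.range (Fintype.card V - 1)).powerset,
        a S • funF (Fintype.card V) ↑S := by
  classical
  choose σ hσ using fun e : Set V => e.to_countable.exists_cycleOn
  have hcycle (e) (_ : e ∈ E) : (σ e).IsCycleOn e := (hσ e).1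
  have hmaps (e) (_ : e ∈ E) : Set.MapsTo (σ e) e e := (hσ e).1.1.mapsTo
  have hnontrivial (e) (he : e ∈ E) : e.Nontrivial :=
    (Set.one_lt_ncard_iff_nontrivial).mp (hp e he).one_lt
  obtain ⟨ω, hω⟩ := exists_isTieBreak hE hmaps
  rw [chromSym_eq_sum_funF (fun π => (ω π).injective)
    (fun χ => ⟨fun hχ => hω.exists_isStandardization hE hmaps fun e he =>
        cycleWord_injOn (hcycle e he) (hp e he) (hχ e he),
      fun ⟨π, hπ⟩ => hω.isProperColoring hcycle hnontrivial hπ⟩)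
    (fun χ π π' => hω.isStandardization_unique hcycle)]
  exact exists_nonneg_sum_smul_funF _ fun π => Finset.filter_subset _ _

/-- If `H` is a hypertree all of whose edges have prime size, then
`X_H` is `F`-positive: it is a nonnegative combination of fundamental quasisymmetric
functions of degree `n = |V|`. -/
theorem hypertree_prime_F_positive {V : Type} [Fintype V] (E : Set (Set V))
    (hT : IsHypertreeOn Set.univ E) (hp : ∀ e ∈ E, (e.ncard).Prime)
    (n : ℕ) (hn : Fintype.card V = n) :
    ∃ a : Finset ℕ → ℚ, (∀ S, 0 ≤ a S) ∧
      chromSym E = ∑ S ∈ (Finset.range (n - 1)).powerset, a S • funF n ↑S := by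
  subst hn
  exact hypertree_prime_F_positive_general E hT.2.2 hp
end
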